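/- Let X be a log-concave real random variable with mean 0 and variance γ². Then for every s ≥ γ, P(|X| ≥ s) ≤ e^{-s/(2γ)}. -/

import Mathlib

open MeasureTheory ProbabilityTheory Real

/-- A real random variable (given by its law) is log-concave if its law has a
log-concave density with respect to Lebesgue measure. -/
def IsLogConcaveLaw (μ : MeasureTheory.Measure ℝ) : Prop :=
  ∃ ρ : ℝ → ℝ, (∀ x, 0 ≤ ρ x) ∧
    μ = MeasureTheory.volume.withDensity (fun x => ENNReal.ofReal (ρ x)) ∧
    ∀ x y : ℝ, ∀ l : ℝ, 0 < l → l < 1 →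
      ρ x ^ l * ρ y ^ (1 - l) ≤ ρ (l * x + (1 - l) * y)

/-!
Three ranges of `s` are treated separately. For `γ ≤ s ≤ 3γ/2`, `x ↦ P(|X - x| < s)` is
log-concave by Prékopa–Leindler, and it is the density of the convolution of the law of `X` with
Lebesgue measure on `(-s, s)`, which has mass `2s`, mean `0` and variance `γ² + s²/3`. Comparison
with a Gaussian bounds the value at its mean of a log-concave density from below by
`mass / √(2πe · variance)`, hence bounds `P(|X| < s)` from below. For `3γ/2 ≤ s ≤ 6γ` Chebyshev's
inequality is enough. For `s > 6γ`, if the claim failed at `s`, Borell's lemma would propagate the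
heavy tail down to `2γ`, `4γ` and `6γ`, against the layered Chebyshev inequality
`∑ k, (2k + 1) P(|X| ≥ (k + 1)c) ≤ E X² / c²`.
-/

section PrekopaLeindler

open Set
open scoped ENNReal Pointwise

-- The translates `K + min L` and `max K + L` both lie in `K + L` and share at most one point.
lemma volume_add_volume_le_of_isCompact {K L : Set ℝ} (hK : IsCompact K) (hL : IsCompact L)
    (hK₀ : K.Nonempty) (hL₀ : L.Nonempty) : volume K + volume L ≤ volume (K + L) := by
  obtain ⟨k, hkK, hk⟩ := hK.exists_isGreatest hK₀
  obtain ⟨l, hlL, hl⟩ := hL.exists_isLeast hL₀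
  have hinter : (l +ᵥ K) ∩ (k +ᵥ L) ⊆ {k + l} := by
    rintro _ ⟨⟨x, hx, rfl⟩, y, hy, hxy⟩
    simp only [vadd_eq_add] at hxy
    have := hk hx
    have := hl hy
    simp only [vadd_eq_add, mem_singleton_iff]
    linarith
  have hdisj : AEDisjoint volume (l +ᵥ K) (k +ᵥ L) := measure_mono_null hinter (by simp)
  have hunion : (l +ᵥ K) ∪ (k +ᵥ L) ⊆ K + L := by
    rintro _ (⟨x, hx, rfl⟩ | ⟨y, hy, rfl⟩)
    · simpa only [vadd_eq_add, add_comm] using add_mem_add hx hlL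
    · exact add_mem_add hkK hy
  calc volume K + volume L = volume (l +ᵥ K) + volume (k +ᵥ L) := by
        rw [measure_vadd, measure_vadd]
    _ = volume ((l +ᵥ K) ∪ (k +ᵥ L)) :=
        (measure_union₀ (hL.vadd k).measurableSet.nullMeasurableSet hdisj).symm
    _ ≤ volume (K + L) := measure_mono hunion

lemma volume_add_volume_le {A B : Set ℝ} (hA : MeasurableSet A) (hB : MeasurableSet B)
    (hA₀ : A.Nonempty) (hB₀ : B.Nonempty) : volume A + volume B ≤ volume (A + B) := by
  obtain ⟨⟨x, hx⟩, ⟨y, hy⟩⟩ := And.intro hA₀ hB₀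
  rw [hA.measure_eq_iSup_isCompact, hB.measure_eq_iSup_isCompact]
  simp only [iSup_and']
  refine ENNReal.biSup_add_biSup_le' ⟨∅, by simp⟩ ⟨∅, by simp⟩ fun K hK L hL => ?_
  calc volume K + volume L ≤ volume (insert x K) + volume (insert y L) := by
        gcongr <;> exact subset_insert _ _
    _ ≤ volume (insert x K + insert y L) :=
        volume_add_volume_le_of_isCompact (hK.2.insert x) (hL.2.insert y)
          (insert_nonempty _ _) (insert_nonempty _ _)
    _ ≤ volume (A + B) :=
        measure_mono (add_subset_add (insert_subset hx hK.1) (insert_subset hy hL.1))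

lemma geom_mean_le_arith_mean2_weighted_ennreal {a b : ℝ} (ha : 0 < a) (hb : 0 < b)
    (hab : a + b = 1) (x y : ℝ≥0∞) :
    x ^ a * y ^ b ≤ ENNReal.ofReal a * x + ENNReal.ofReal b * y := by
  have hconj : (a⁻¹).HolderConjugate b⁻¹ := by
    rw [Real.holderConjugate_iff, inv_inv, inv_inv]
    exact ⟨(one_lt_inv₀ ha).2 (by linarith), hab⟩
  have := ENNReal.young_inequality (x ^ a) (y ^ b) hconj
  rwa [← ENNReal.rpow_mul, ← ENNReal.rpow_mul, mul_inv_cancel₀ ha.ne', mul_inv_cancel₀ hb.ne',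
    ENNReal.rpow_one, ENNReal.rpow_one, ENNReal.ofReal_inv_of_pos ha, ENNReal.ofReal_inv_of_pos hb,
    div_eq_mul_inv, div_eq_mul_inv, inv_inv, inv_inv, mul_comm x, mul_comm y] at this

lemma lintegral_ofReal_eq_lintegral_Ioo_of_le_one {α : Type*} [MeasurableSpace α] {μ : Measure α}
    {f : α → ℝ} (hf : Measurable f) (hf₀ : 0 ≤ f) (hf₁ : f ≤ 1) :
    ∫⁻ x, ENNReal.ofReal (f x) ∂μ = ∫⁻ t in Ioo (0 : ℝ) 1, μ {x | t < f x} := by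
  rw [lintegral_eq_lintegral_meas_lt _ (.of_forall hf₀) hf.aemeasurable,
    ← Ioo_union_Ici_eq_Ioi zero_lt_one,
    lintegral_union measurableSet_Ici ((Iio_disjoint_Ici le_rfl).mono_left Ioo_subset_Iio_self)]
  have hempty : ∀ t ∈ Ici (1 : ℝ), μ {x | t < f x} = 0 := fun t ht => by
    have : {x | t < f x} = ∅ :=
      eq_empty_of_forall_notMem fun x (hx : t < f x) => (hx.trans_le (hf₁ x)).not_ge ht
    rw [this, measure_empty]
  rw [setLIntegral_congr_fun measurableSet_Ici hempty, lintegral_zero, add_zero]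

-- Each superlevel set of `h` contains the Minkowski combination of those of `f` and `g`.
lemma prekopa_leindler_of_isLUB_one {f g h : ℝ → ℝ} {a b : ℝ} (ha : 0 < a) (hb : 0 < b)
    (hab : a + b = 1) (hf : Measurable f) (hg : Measurable g) (hh : Measurable h)
    (hf₀ : 0 ≤ f) (hg₀ : 0 ≤ g) (hh₀ : 0 ≤ h)
    (hf₁ : IsLUB (range f) 1) (hg₁ : IsLUB (range g) 1)
    (hfgh : ∀ x y, f x ^ a * g y ^ b ≤ h (a * x + b * y)) :
    ENNReal.ofReal a * (∫⁻ x, ENNReal.ofReal (f x)) + ENNReal.ofReal b * ∫⁻ x, ENNReal.ofReal (g x)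
      ≤ ∫⁻ x, ENNReal.ofReal (h x) := by
  have hlevel : ∀ t ∈ Ioo (0 : ℝ) 1,
      ENNReal.ofReal a * volume {x | t < f x} + ENNReal.ofReal b * volume {x | t < g x}
        ≤ volume {x | t < h x} := by
    rintro t ⟨ht₀, ht₁⟩
    obtain ⟨_, ⟨x, rfl⟩, hx, -⟩ := hf₁.exists_between ht₁
    obtain ⟨_, ⟨y, rfl⟩, hy, -⟩ := hg₁.exists_between ht₁
    have hsub : a • {x | t < f x} + b • {x | t < g x} ⊆ {x | t < h x} := by
      rintro _ ⟨_, ⟨u, hu : t < f u, rfl⟩, _, ⟨v, hv : t < g v, rfl⟩, rfl⟩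
      calc t = t ^ a * t ^ b := by rw [← rpow_add ht₀, hab, rpow_one]
        _ < f u ^ a * g v ^ b := by gcongr
        _ ≤ h (a * u + b * v) := hfgh u v
    have hscale (c : ℝ) (hc : 0 < c) (S : Set ℝ) :
        ENNReal.ofReal c * volume S = volume (c • S) := by
      rw [Measure.addHaar_smul_of_nonneg _ hc.le, Module.finrank_self, pow_one]
    rw [hscale a ha, hscale b hb]
    exact (volume_add_volume_le ((measurableSet_lt measurable_const hf).const_smul₀ a)
      ((measurableSet_lt measurable_const hg).const_smul₀ b) ⟨_, x, hx, rfl⟩ ⟨_, y, hy, rfl⟩).trans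
      (measure_mono hsub)
  have hmeas {k : ℝ → ℝ} : Measurable fun t => volume {x | t < k x} :=
    Antitone.measurable fun s t hst => measure_mono fun x (hx : t < k x) => hst.trans_lt hx
  rw [lintegral_ofReal_eq_lintegral_Ioo_of_le_one hf hf₀ fun x => hf₁.1 ⟨x, rfl⟩,
    lintegral_ofReal_eq_lintegral_Ioo_of_le_one hg hg₀ fun x => hg₁.1 ⟨x, rfl⟩,
    ← lintegral_const_mul _ hmeas, ← lintegral_const_mul _ hmeas,
    ← lintegral_add_left (hmeas.const_mul _),
    lintegral_eq_lintegral_meas_lt _ (.of_forall hh₀) hh.aemeasurable]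
  exact (setLIntegral_mono hmeas hlevel).trans (lintegral_mono_set Ioo_subset_Ioi_self)

lemma isLUB_range_inv_iSup_mul {f : ℝ → ℝ} (hf : BddAbove (range f)) (hpos : 0 < ⨆ x, f x) :
    IsLUB (range fun x => (⨆ x, f x)⁻¹ * f x) 1 := by
  have := (isLUB_ciSup hf).mul_left (inv_nonneg.2 hpos.le)
  rwa [inv_mul_cancel₀ hpos.ne', ← range_comp] at this

lemma lintegral_ofReal_const_mul {α : Type*} [MeasurableSpace α] {μ : Measure α} {c : ℝ}
    (hc : 0 ≤ c) {f : α → ℝ} (hf : Measurable f) :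
    ∫⁻ x, ENNReal.ofReal (c * f x) ∂μ = ENNReal.ofReal c * ∫⁻ x, ENNReal.ofReal (f x) ∂μ := by
  simp only [ENNReal.ofReal_mul hc]
  exact lintegral_const_mul _ hf.ennreal_ofReal

lemma ofReal_inv_mul_rpow {c e : ℝ} (hc : 0 < c) (he : 0 ≤ e) (I : ℝ≥0∞) :
    (ENNReal.ofReal c⁻¹ * I) ^ e = (ENNReal.ofReal (c ^ e))⁻¹ * I ^ e := by
  rw [ENNReal.mul_rpow_of_nonneg _ _ he, ENNReal.ofReal_rpow_of_nonneg (by positivity) he,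
    inv_rpow hc.le, ENNReal.ofReal_inv_of_pos (by positivity)]

lemma prekopa_leindler_of_iSup_pos {f g h : ℝ → ℝ} {a b : ℝ} (ha : 0 < a) (hb : 0 < b)
    (hab : a + b = 1) (hf : Measurable f) (hg : Measurable g) (hh : Measurable h)
    (hf₀ : 0 ≤ f) (hg₀ : 0 ≤ g) (hh₀ : 0 ≤ h)
    (hf_bdd : BddAbove (range f)) (hg_bdd : BddAbove (range g))
    (hf_pos : 0 < ⨆ x, f x) (hg_pos : 0 < ⨆ x, g x)
    (hfgh : ∀ x y, f x ^ a * g y ^ b ≤ h (a * x + b * y)) :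
    (∫⁻ x, ENNReal.ofReal (f x)) ^ a * (∫⁻ x, ENNReal.ofReal (g x)) ^ b
      ≤ ∫⁻ x, ENNReal.ofReal (h x) := by
  have hf₁ := isLUB_range_inv_iSup_mul hf_bdd hf_pos
  have hg₁ := isLUB_range_inv_iSup_mul hg_bdd hg_pos
  set F := ⨆ x, f x
  set G := ⨆ x, g x
  set C := F ^ a * G ^ b
  have hC : 0 < C := by positivity
  have hfgh' (x y : ℝ) : (F⁻¹ * f x) ^ a * (G⁻¹ * g y) ^ b ≤ C⁻¹ * h (a * x + b * y) := by
    rw [mul_rpow (by positivity) (hf₀ x), mul_rpow (by positivity) (hg₀ y),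
      inv_rpow hf_pos.le, inv_rpow hg_pos.le, mul_mul_mul_comm, ← mul_inv]
    gcongr
    exact hfgh x y
  have key : (ENNReal.ofReal C)⁻¹ *
      ((∫⁻ x, ENNReal.ofReal (f x)) ^ a * (∫⁻ x, ENNReal.ofReal (g x)) ^ b)
        ≤ (ENNReal.ofReal C)⁻¹ * ∫⁻ x, ENNReal.ofReal (h x) := by
    calc _ = (∫⁻ x, ENNReal.ofReal (F⁻¹ * f x)) ^ a * (∫⁻ x, ENNReal.ofReal (G⁻¹ * g x)) ^ b := by
          rw [lintegral_ofReal_const_mul (by positivity) hf,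
            lintegral_ofReal_const_mul (by positivity) hg, ofReal_inv_mul_rpow hf_pos ha.le,
            ofReal_inv_mul_rpow hg_pos hb.le, ENNReal.ofReal_mul (by positivity),
            ENNReal.mul_inv (.inl (by positivity)) (.inl ENNReal.ofReal_ne_top)]
          ring
      _ ≤ _ := geom_mean_le_arith_mean2_weighted_ennreal ha hb hab _ _
      _ ≤ ∫⁻ x, ENNReal.ofReal (C⁻¹ * h x) :=
          prekopa_leindler_of_isLUB_one ha hb hab (by fun_prop) (by fun_prop) (by fun_prop)
            (fun x => mul_nonneg (by positivity) (hf₀ x))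
            (fun x => mul_nonneg (by positivity) (hg₀ x))
            (fun x => mul_nonneg (by positivity) (hh₀ x)) hf₁ hg₁ hfgh'
      _ = _ := by rw [lintegral_ofReal_const_mul (by positivity) hh, ENNReal.ofReal_inv_of_pos hC]
  rwa [ENNReal.mul_le_mul_iff_right (by simp) (by simp [hC])] at key

lemma prekopa_leindler_of_bddAbove {f g h : ℝ → ℝ} {a b : ℝ} (ha : 0 < a) (hb : 0 < b)
    (hab : a + b = 1) (hf : Measurable f) (hg : Measurable g) (hh : Measurable h)
    (hf₀ : 0 ≤ f) (hg₀ : 0 ≤ g) (hh₀ : 0 ≤ h)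
    (hf_bdd : BddAbove (range f)) (hg_bdd : BddAbove (range g))
    (hfgh : ∀ x y, f x ^ a * g y ^ b ≤ h (a * x + b * y)) :
    (∫⁻ x, ENNReal.ofReal (f x)) ^ a * (∫⁻ x, ENNReal.ofReal (g x)) ^ b
      ≤ ∫⁻ x, ENNReal.ofReal (h x) := by
  have hzero {k : ℝ → ℝ} (hk : BddAbove (range k)) (hsup : ¬ 0 < ⨆ x, k x) :
      ∫⁻ x, ENNReal.ofReal (k x) = 0 := by
    have : ∀ x, k x ≤ 0 := fun x => (le_ciSup hk x).trans (not_lt.1 hsup)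
    simp [ENNReal.ofReal_of_nonpos (this _)]
  by_cases hf_pos : 0 < ⨆ x, f x; swap
  · simp [hzero hf_bdd hf_pos, ha]
  by_cases hg_pos : 0 < ⨆ x, g x; swap
  · simp [hzero hg_bdd hg_pos, hb]
  exact prekopa_leindler_of_iSup_pos ha hb hab hf hg hh hf₀ hg₀ hh₀ hf_bdd hg_bdd hf_pos hg_pos hfgh

lemma lintegral_ofReal_eq_iSup_lintegral_min {α : Type*} [MeasurableSpace α] {μ : Measure α}
    {f : α → ℝ} (hf : Measurable f) :
    ∫⁻ x, ENNReal.ofReal (f x) ∂μ = ⨆ n : ℕ, ∫⁻ x, ENNReal.ofReal (min (f x) n) ∂μ := by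
  rw [← lintegral_iSup (fun n => by fun_prop) fun m n hmn x => by dsimp only; gcongr]
  refine lintegral_congr fun x => le_antisymm ?_ (iSup_le fun n => by gcongr; exact min_le_left _ _)
  obtain ⟨n, hn⟩ := exists_nat_ge (f x)
  exact le_iSup_of_le n (by rw [min_eq_left hn])

theorem prekopa_leindler {f g h : ℝ → ℝ} {a b : ℝ} (ha : 0 < a) (hb : 0 < b)
    (hab : a + b = 1) (hf : Measurable f) (hg : Measurable g) (hh : Measurable h)
    (hf₀ : 0 ≤ f) (hg₀ : 0 ≤ g) (hh₀ : 0 ≤ h)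
    (hfgh : ∀ x y, f x ^ a * g y ^ b ≤ h (a * x + b * y)) :
    (∫⁻ x, ENNReal.ofReal (f x)) ^ a * (∫⁻ x, ENNReal.ofReal (g x)) ^ b
      ≤ ∫⁻ x, ENNReal.ofReal (h x) := by
  have hiSup_rpow {c : ℝ} (hc : 0 < c) (u : ℕ → ℝ≥0∞) : (⨆ n, u n) ^ c = ⨆ n, u n ^ c :=
    (ENNReal.orderIsoRpow c hc).map_iSup u
  have hbdd (k : ℝ → ℝ) (n : ℕ) : BddAbove (range fun x => min (k x) n) :=
    ⟨n, forall_mem_range.2 fun x => min_le_right _ _⟩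
  have hmin₀ {k : ℝ → ℝ} (hk : 0 ≤ k) (n : ℕ) : 0 ≤ fun x => min (k x) n :=
    fun x => le_min (hk x) n.cast_nonneg
  rw [lintegral_ofReal_eq_iSup_lintegral_min hf, lintegral_ofReal_eq_iSup_lintegral_min hg,
    hiSup_rpow ha, hiSup_rpow hb]
  simp only [ENNReal.iSup_mul, ENNReal.mul_iSup, iSup_le_iff]
  refine fun n m => prekopa_leindler_of_bddAbove ha hb hab (by fun_prop) (by fun_prop) hh
    (hmin₀ hf₀ _) (hmin₀ hg₀ _) hh₀ (hbdd f _) (hbdd g _) fun x y => le_trans ?_ (hfgh x y)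
  exact mul_le_mul (rpow_le_rpow (hmin₀ hf₀ m x) (min_le_left _ _) ha.le)
    (rpow_le_rpow (hmin₀ hg₀ n y) (min_le_left _ _) hb.le) (rpow_nonneg (hmin₀ hg₀ n y) _)
    (rpow_nonneg (hf₀ x) _)

end PrekopaLeindler

section LogConcave

open Set

/-- Log-concavity of a nonnegative function on a real vector space, stated multiplicatively so
that the function may vanish. -/
structure IsLogConcave {E : Type*} [AddCommMonoid E] [Module ℝ E] (f : E → ℝ) : Prop where
  nonneg : ∀ x, 0 ≤ f x
  rpow_mul_rpow_le : ∀ x y : E, ∀ l : ℝ, 0 < l → l < 1 →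
    f x ^ l * f y ^ (1 - l) ≤ f (l • x + (1 - l) • y)

namespace IsLogConcave

variable {E : Type*} [AddCommMonoid E] [Module ℝ E] {f : E → ℝ}

lemma concaveOn_log (hf : IsLogConcave f) : ConcaveOn ℝ {x | 0 < f x} fun x => log (f x) := by
  rw [concaveOn_iff_forall_pos]
  have hle : ∀ ⦃x⦄, 0 < f x → ∀ ⦃y⦄, 0 < f y → ∀ ⦃a b : ℝ⦄, 0 < a → 0 < b → a + b = 1 →
      0 < f x ^ a * f y ^ b ∧ f x ^ a * f y ^ b ≤ f (a • x + b • y) := by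
    intro x hx y hy a b ha hb hab
    obtain rfl : b = 1 - a := by linarith
    exact ⟨by positivity, hf.rpow_mul_rpow_le x y a ha (by linarith)⟩
  refine ⟨convex_iff_forall_pos.2 fun x hx y hy a b ha hb hab => ?_,
    fun x hx y hy a b ha hb hab => ?_⟩
  · exact (hle hx hy ha hb hab).1.trans_le (hle hx hy ha hb hab).2
  · have hx' : 0 < f x := hx
    have hy' : 0 < f y := hy
    calc a • log (f x) + b • log (f y) = log (f x ^ a * f y ^ b) := by
          rw [log_mul (by positivity) (by positivity), log_rpow hx, log_rpow hy]; rfl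
      _ ≤ log (f (a • x + b • y)) := log_le_log (hle hx hy ha hb hab).1 (hle hx hy ha hb hab).2

lemma quasiconcaveOn (hf : IsLogConcave f) : QuasiconcaveOn ℝ univ f := by
  intro r
  rcases le_or_gt r 0 with hr | hr
  · simpa [fun x => hr.trans (hf.nonneg x)] using convex_univ
  · have hset : {x ∈ univ | r ≤ f x} = {x ∈ {x | 0 < f x} | log r ≤ log (f x)} := by
      ext x
      simp only [mem_univ, true_and]
      exact ⟨fun hx => ⟨hr.trans_le hx, log_le_log hr hx⟩,
        fun hx => (log_le_log_iff hr hx.1).1 hx.2⟩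
    rw [hset]
    exact hf.concaveOn_log.quasiconcaveOn (log r)

end IsLogConcave

lemma IsLogConcave.measurable {f : ℝ → ℝ} (hf : IsLogConcave f) : Measurable f :=
  measurable_of_Ici fun r => by
    have hpre : f ⁻¹' Ici r = {x ∈ univ | r ≤ f x} := by ext; simp
    exact hpre ▸ (hf.quasiconcaveOn r).ordConnected.measurableSet

lemma exists_forall_le_add_mul_sub_of_concaveOn {S : Set ℝ} {φ : ℝ → ℝ} {z : ℝ}
    (hφ : ConcaveOn ℝ S φ) (hz : z ∈ interior S) : ∃ β, ∀ w ∈ S, φ w ≤ φ z + β * (w - z) := by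
  have hconv := neg_convexOn_iff.2 hφ
  refine ⟨-derivWithin (-φ) (Ioi z) z, fun w hw => ?_⟩
  rcases lt_trichotomy w z with hwz | rfl | hzw
  · have := (hconv.slope_le_leftDeriv_of_mem_interior hw hz hwz).trans
      (hconv.leftDeriv_le_rightDeriv_of_mem_interior hz)
    rw [slope_def_field, div_le_iff₀ (sub_pos.2 hwz), Pi.neg_apply, Pi.neg_apply] at this
    linarith
  · simp
  · have := hconv.rightDeriv_le_slope_of_mem_interior hz hw hzw
    rw [slope_def_field, le_div_iff₀ (sub_pos.2 hzw), Pi.neg_apply, Pi.neg_apply] at this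
    linarith

lemma IsLogConcave.exists_forall_le_mul_exp {f : ℝ → ℝ} (hf : IsLogConcave f) {z : ℝ}
    (hz : z ∈ interior {x | 0 < f x}) : ∃ β, ∀ w, f w ≤ f z * exp (β * (w - z)) := by
  obtain ⟨β, hβ⟩ := exists_forall_le_add_mul_sub_of_concaveOn hf.concaveOn_log hz
  have hz₀ : 0 < f z := (interior_subset hz : z ∈ {x | 0 < f x})
  refine ⟨β, fun w => ?_⟩
  rcases (hf.nonneg w).eq_or_lt with hw | hw
  · rw [← hw]
    positivity
  · rw [← log_le_log_iff hw (by positivity), log_mul hz₀.ne' (exp_ne_zero _), log_exp]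
    exact hβ w hw

end LogConcave

namespace IsLogConcaveLaw

open Set

variable {μ : Measure ℝ}

lemma measureReal_rpow_mul_rpow_le [IsFiniteMeasure μ] (hμ : IsLogConcaveLaw μ) {A B C : Set ℝ}
    (hA : MeasurableSet A) (hB : MeasurableSet B) (hC : MeasurableSet C) {l : ℝ} (hl₀ : 0 < l)
    (hl₁ : l < 1) (hABC : ∀ x ∈ A, ∀ y ∈ B, l * x + (1 - l) * y ∈ C) :
    μ.real A ^ l * μ.real B ^ (1 - l) ≤ μ.real C := by
  obtain ⟨ρ, hρ₀, hρ, hlc⟩ := hμ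
  have hmeas : Measurable ρ := IsLogConcave.measurable ⟨hρ₀, hlc⟩
  have hμ_apply {S : Set ℝ} (hS : MeasurableSet S) :
      μ S = ∫⁻ x, ENNReal.ofReal (S.indicator ρ x) := by
    rw [hρ, withDensity_apply _ hS, ← lintegral_indicator hS]
    congr with x
    by_cases hx : x ∈ S <;> simp [hx]
  have hind (S : Set ℝ) : 0 ≤ S.indicator ρ := indicator_nonneg fun x _ => hρ₀ x
  have key : μ A ^ l * μ B ^ (1 - l) ≤ μ C := by
    rw [hμ_apply hA, hμ_apply hB, hμ_apply hC]
    refine prekopa_leindler hl₀ (sub_pos.2 hl₁) (add_sub_cancel _ _) (hmeas.indicator hA)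
      (hmeas.indicator hB) (hmeas.indicator hC) (hind A) (hind B) (hind C) fun x y => ?_
    by_cases hx : x ∈ A; swap
    · simpa [hx, zero_rpow hl₀.ne'] using hind C _
    by_cases hy : y ∈ B; swap
    · simpa [hy, zero_rpow (sub_pos.2 hl₁).ne'] using hind C _
    simpa [hx, hy, hABC x hx y hy] using hlc x y l hl₀ hl₁
  simpa [measureReal_def, ENNReal.toReal_rpow] using ENNReal.toReal_mono (measure_ne_top μ C) key

end IsLogConcaveLaw

section Barycenter

open Set Metric
open scoped ENNReal

-- `exp u` is bounded below by `1 + u` with `u = 1 / 2 - β * x - c * x ^ 2`, where `f x` is at most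
-- `f 0 * exp (β * x)`: the unknown slope `β` only enters through the mean of `f`.
lemma IsLogConcave.exists_forall_mul_le_gaussian {f : ℝ → ℝ} (hf : IsLogConcave f)
    (hf_zero : 0 ∈ interior {x | 0 < f x}) (c : ℝ) :
    ∃ β, ∀ x, f x * (3 / 2 - β * x - c * x ^ 2) ≤ f 0 * exp (1 / 2) * exp (-c * x ^ 2) := by
  obtain ⟨β, hβ⟩ := hf.exists_forall_le_mul_exp hf_zero
  refine ⟨β, fun x => ?_⟩
  have hexp : 3 / 2 - β * x - c * x ^ 2 ≤ exp (1 / 2 - β * x - c * x ^ 2) := by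
    linarith [add_one_le_exp (1 / 2 - β * x - c * x ^ 2)]
  calc f x * (3 / 2 - β * x - c * x ^ 2) ≤ f x * exp (1 / 2 - β * x - c * x ^ 2) :=
        mul_le_mul_of_nonneg_left hexp (hf.nonneg x)
    _ ≤ f 0 * exp (β * (x - 0)) * exp (1 / 2 - β * x - c * x ^ 2) := by
        gcongr
        exact hβ x
    _ = f 0 * exp (1 / 2) * exp (-c * x ^ 2) := by
        rw [mul_assoc, mul_assoc, ← exp_add, ← exp_add]
        ring_nf

lemma IsLogConcave.measureReal_univ_le {f : ℝ → ℝ} (hf : IsLogConcave f)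
    (hf_zero : 0 ∈ interior {x | 0 < f x}) {ν : Measure ℝ} [IsFiniteMeasure ν]
    (hν : ν = volume.withDensity fun x => ENNReal.ofReal (f x)) (hL2 : MemLp id 2 ν)
    (hmean : ∫ x, x ∂ν = 0) {v : ℝ} (hv : 0 < v) (hvar : ∫ x, x ^ 2 ∂ν = v * ν.real univ) :
    ν.real univ ≤ f 0 * √(2 * π * exp 1 * v) := by
  obtain ⟨β, hβ⟩ := hf.exists_forall_mul_le_gaussian hf_zero (2 * v)⁻¹
  have hint_id : Integrable (fun x : ℝ => x) ν := hL2.integrable one_le_two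
  have hint_sq : Integrable (fun x : ℝ => x ^ 2) ν := hL2.integrable_sq
  have hint_affine : Integrable (fun x => 3 / 2 - β * x) ν :=
    (integrable_const _).sub (hint_id.const_mul β)
  have hquad : ∫ x, 3 / 2 - β * x - (2 * v)⁻¹ * x ^ 2 ∂ν = ν.real univ := by
    rw [integral_sub hint_affine (hint_sq.const_mul _),
      integral_sub (integrable_const _) (hint_id.const_mul β), integral_const, integral_const_mul,
      integral_const_mul, hvar, hmean, smul_eq_mul]
    field_simp
    ring
  have hmeas : Measurable fun x => ENNReal.ofReal (f x) := hf.measurable.ennreal_ofReal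
  have hfin : ∀ᵐ x : ℝ, ENNReal.ofReal (f x) < ∞ := .of_forall fun x => ENNReal.ofReal_lt_top
  have htoReal (x : ℝ) : (ENNReal.ofReal (f x)).toReal = f x := ENNReal.toReal_ofReal (hf.nonneg x)
  have hquad_int : Integrable (fun x => 3 / 2 - β * x - (2 * v)⁻¹ * x ^ 2) ν :=
    hint_affine.sub (hint_sq.const_mul _)
  rw [hν, integrable_withDensity_iff_integrable_smul' hmeas hfin] at hquad_int
  calc ν.real univ = ∫ x, f x * (3 / 2 - β * x - (2 * v)⁻¹ * x ^ 2) := by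
        rw [← hquad, hν, integral_withDensity_eq_integral_toReal_smul hmeas hfin]
        simp only [htoReal, smul_eq_mul]
    _ ≤ ∫ x, f 0 * exp (1 / 2) * exp (-(2 * v)⁻¹ * x ^ 2) :=
        integral_mono (by simpa only [htoReal, smul_eq_mul] using hquad_int)
          ((integrable_exp_neg_mul_sq (by positivity)).const_mul _) hβ
    _ = f 0 * √(2 * π * exp 1 * v) := by
        rw [integral_const_mul, integral_gaussian, mul_assoc, exp_half, ← sqrt_mul (exp_pos 1).le]
        congr 2
        field_simp

lemma conv_restrict_ball_zero {E : Type*} [NormedAddCommGroup E] [MeasurableSpace E] [BorelSpace E]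
    [SecondCountableTopology E] (μ ν : Measure E) [SFinite μ] [SFinite ν] [ν.IsAddLeftInvariant]
    (s : ℝ) : μ ∗ ν.restrict (ball 0 s) = ν.withDensity fun x => μ (ball x s) := by
  have hball : MeasurableSet {z : E × E | z.2 ∈ ball z.1 s} :=
    (isOpen_lt (continuous_snd.dist continuous_fst) continuous_const).measurableSet
  ext A hA
  have hmeas : Measurable (A.indicator (1 : E → ℝ≥0∞)) := measurable_one.indicator hA
  calc (μ ∗ ν.restrict (ball 0 s)) A
      = ∫⁻ y, (∫⁻ t in ball 0 s, A.indicator 1 (y + t) ∂ν) ∂μ := by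
        rw [← lintegral_indicator_one hA, Measure.lintegral_conv hmeas]
    _ = ∫⁻ y, (∫⁻ x, (ball y s).indicator (A.indicator 1) x ∂ν) ∂μ := by
        refine lintegral_congr fun y => ?_
        rw [← lintegral_indicator measurableSet_ball,
          ← lintegral_add_left_eq_self ((ball y s).indicator (A.indicator 1)) y]
        refine lintegral_congr fun t => ?_
        by_cases ht : t ∈ ball 0 s <;> simp_all [indicator]
    _ = ∫⁻ x, ∫⁻ y, (ball y s).indicator (A.indicator 1) x ∂μ ∂ν :=
        lintegral_lintegral_swap ((hmeas.comp measurable_snd).indicator hball).aemeasurable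
    _ = ∫⁻ x, A.indicator (fun x => μ (ball x s)) x ∂ν := by
        refine lintegral_congr fun x => ?_
        by_cases hx : x ∈ A
        · rw [indicator_of_mem hx, ← lintegral_indicator_one measurableSet_ball]
          refine lintegral_congr fun y => ?_
          simp [indicator, hx, dist_comm]
        · simp [indicator, hx]
    _ = ν.withDensity (fun x => μ (ball x s)) A := by
        rw [lintegral_indicator hA, withDensity_apply _ hA]

section Convolution

variable {μ κ : Measure ℝ} [IsFiniteMeasure μ] [IsFiniteMeasure κ]

lemma memLp_id_conv {p : ℝ≥0∞} (hμ : MemLp id p μ) (hκ : MemLp id p κ) :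
    MemLp id p (μ ∗ κ) :=
  (memLp_map_measure_iff (by fun_prop) (by fun_prop)).2 ((hμ.comp_fst κ).add (hκ.comp_snd μ))

lemma integral_id_conv (hμ : MemLp id 1 μ) (hκ : MemLp id 1 κ) (hμ₀ : ∫ x, x ∂μ = 0)
    (hκ₀ : ∫ x, x ∂κ = 0) : ∫ x, x ∂(μ ∗ κ) = 0 := by
  have hconv : Integrable (fun x : ℝ => x) (μ ∗ κ) :=
    memLp_one_iff_integrable.1 (memLp_id_conv hμ hκ)
  rw [integral_conv hconv]
  have hκ' : Integrable (fun x : ℝ => x) κ := memLp_one_iff_integrable.1 hκ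
  simp only [integral_add (integrable_const _) hκ', hκ₀, integral_const, smul_eq_mul, add_zero]
  rw [integral_const_mul, hμ₀, mul_zero]

lemma integral_sq_conv (hμ : MemLp id 2 μ) (hκ : MemLp id 2 κ) (hκ₀ : ∫ x, x ∂κ = 0) :
    ∫ x, x ^ 2 ∂(μ ∗ κ) = κ.real univ * ∫ x, x ^ 2 ∂μ + μ.real univ * ∫ x, x ^ 2 ∂κ := by
  have hconv : Integrable (fun x : ℝ => x ^ 2) (μ ∗ κ) := (memLp_id_conv hμ hκ).integrable_sq
  rw [integral_conv hconv]
  have hμ₂ : Integrable (fun x : ℝ => x ^ 2) μ := hμ.integrable_sq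
  have hκ₁ : Integrable (fun x : ℝ => x) κ := hκ.integrable one_le_two
  have hκ₂ : Integrable (fun x : ℝ => x ^ 2) κ := hκ.integrable_sq
  have hinner (y : ℝ) : ∫ t, (y + t) ^ 2 ∂κ = κ.real univ * y ^ 2 + ∫ t, t ^ 2 ∂κ := by
    have haffine : Integrable (fun t => y ^ 2 + 2 * y * t) κ :=
      (integrable_const _).add (hκ₁.const_mul _)
    simp only [add_sq]
    rw [integral_add haffine hκ₂, integral_add (integrable_const _) (hκ₁.const_mul _),
      integral_const_mul, hκ₀, integral_const, smul_eq_mul, mul_zero, add_zero]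
  simp only [hinner]
  rw [integral_add (hμ₂.const_mul _) (integrable_const _), integral_const_mul]
  simp

end Convolution

lemma integral_pow_ball_zero {s : ℝ} (hs : 0 ≤ s) (n : ℕ) :
    ∫ x in ball (0 : ℝ) s, x ^ n = (s ^ (n + 1) - (-s) ^ (n + 1)) / (n + 1) := by
  rw [Real.ball_eq_Ioo, zero_sub, zero_add, ← integral_Ioc_eq_integral_Ioo,
    ← intervalIntegral.integral_of_le (by linarith), integral_pow]

lemma IsLogConcaveLaw.isLogConcave_measureReal_ball {μ : Measure ℝ} [IsFiniteMeasure μ]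
    (hμ : IsLogConcaveLaw μ) (s : ℝ) : IsLogConcave fun x => μ.real (ball x s) where
  nonneg _ := measureReal_nonneg
  rpow_mul_rpow_le x y l hl₀ hl₁ := by
    refine hμ.measureReal_rpow_mul_rpow_le measurableSet_ball measurableSet_ball measurableSet_ball
      hl₀ hl₁ fun u hu v hv => ?_
    have hcomb := (convex_ball (0 : ℝ) s) (x := u - x) (y := v - y) (by simpa [dist_eq] using hu)
      (by simpa [dist_eq] using hv) hl₀.le (sub_nonneg.2 hl₁.le) (add_sub_cancel l 1)
    simp only [smul_eq_mul, mem_ball, dist_eq, sub_zero] at hcomb ⊢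
    convert hcomb using 2
    ring

lemma exists_mem_measureReal_ball_pos {α : Type*} [PseudoMetricSpace α]
    [SecondCountableTopology α] [MeasurableSpace α] {μ : Measure α} [IsFiniteMeasure μ] {S : Set α}
    (hS : μ S ≠ 0) {r : ℝ} (hr : 0 < r) : ∃ x ∈ S, 0 < μ.real (ball x r) := by
  obtain ⟨x, hxS, hx⟩ := exists_mem_forall_mem_nhdsWithin_pos_measure hS
  exact ⟨x, hxS, ENNReal.toReal_pos
    (hx _ (mem_nhdsWithin_of_mem_nhds (ball_mem_nhds x hr))).ne' (measure_ne_top _ _)⟩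

lemma IsLogConcaveLaw.zero_mem_interior_measureReal_ball_pos {μ : Measure ℝ}
    [IsProbabilityMeasure μ] (hμ : IsLogConcaveLaw μ) (hint : Integrable id μ)
    (hmean : ∫ x, x ∂μ = 0) {s : ℝ} (hs : 0 < s) :
    0 ∈ interior {x | 0 < μ.real (ball x s)} := by
  have hnonneg : μ {x | 0 ≤ x} ≠ 0 := by simpa [hmean] using (measure_integral_le_pos hint).ne'
  have hnonpos : μ {x | x ≤ 0} ≠ 0 := by simpa [hmean] using (measure_le_integral_pos hint).ne'
  obtain ⟨x, hx, hx_pos⟩ := exists_mem_measureReal_ball_pos hnonneg (half_pos hs)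
  obtain ⟨y, hy, hy_pos⟩ := exists_mem_measureReal_ball_pos hnonpos (half_pos hs)
  rw [mem_ofPred_eq] at hx hy
  have hx' : 0 < μ.real (ball (x + s / 2) s) := hx_pos.trans_le <|
    measureReal_mono (ball_subset_ball' (by simp [abs_of_pos hs]))
  have hy' : 0 < μ.real (ball (y - s / 2) s) := hy_pos.trans_le <|
    measureReal_mono (ball_subset_ball' (by simp [abs_of_pos hs]))
  have hconn := (hμ.isLogConcave_measureReal_ball s).concaveOn_log.1.ordConnected
  exact mem_interior_iff_mem_nhds.2 <| Filter.mem_of_superset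
    (Icc_mem_nhds (by linarith) (by linarith)) (hconn.out hy' hx')

lemma IsLogConcaveLaw.two_mul_le_measureReal_ball_mul_sqrt {μ : Measure ℝ} [IsProbabilityMeasure μ]
    (hμ : IsLogConcaveLaw μ) (hL2 : MemLp id 2 μ) (hmean : ∫ x, x ∂μ = 0) {s : ℝ} (hs : 0 < s) :
    2 * s ≤ μ.real (ball 0 s) * √(2 * π * exp 1 * (∫ x, x ^ 2 ∂μ + s ^ 2 / 3)) := by
  set κ := (volume : Measure ℝ).restrict (ball 0 s)
  have : IsFiniteMeasure κ := isFiniteMeasure_restrict.2 measure_ball_ne_top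
  have hκ_univ : κ.real univ = 2 * s := by
    simp [κ, measureReal_def, hs.le]
  have hκ₁ : ∫ x, x ∂κ = 0 := by simpa using integral_pow_ball_zero hs.le 1
  have hκ₂ : ∫ x, x ^ 2 ∂κ = 2 * s * (s ^ 2 / 3) := by
    rw [integral_pow_ball_zero hs.le]
    ring
  have hκ : MemLp id 2 κ :=
    MemLp.of_bound (by fun_prop) s <|
      ae_restrict_of_forall_mem measurableSet_ball fun x hx => (mem_ball_zero_iff.1 hx).le
  have hconv_univ : (μ ∗ κ).real univ = 2 * s := by
    rw [← hκ_univ, measureReal_def, Measure.conv, Measure.map_apply measurable_add .univ,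
      preimage_univ, ← univ_prod_univ, Measure.prod_prod, measure_univ, one_mul, measureReal_def]
  have hmean_conv : ∫ x, x ∂(μ ∗ κ) = 0 :=
    integral_id_conv (hL2.mono_exponent one_le_two) (hκ.mono_exponent one_le_two) hmean hκ₁
  have hvar_conv : ∫ x, x ^ 2 ∂(μ ∗ κ) = (∫ x, x ^ 2 ∂μ + s ^ 2 / 3) * (μ ∗ κ).real univ := by
    rw [integral_sq_conv hL2 hκ hκ₁, hconv_univ, hκ_univ, hκ₂, probReal_univ]
    ring
  have hdensity : μ ∗ κ = volume.withDensity fun x => ENNReal.ofReal (μ.real (ball x s)) := by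
    simp only [κ, conv_restrict_ball_zero, ofReal_measureReal (measure_ne_top μ _)]
  have hint : Integrable id μ := hL2.integrable one_le_two
  have key := (hμ.isLogConcave_measureReal_ball s).measureReal_univ_le
    (hμ.zero_mem_interior_measureReal_ball_pos hint hmean hs) hdensity (memLp_id_conv hL2 hκ)
    hmean_conv (by positivity) hvar_conv
  rwa [hconv_univ] at key

end Barycenter

section TailNumerics

open Finset

lemma one_sub_exp_neg_le {v : ℝ} (hv₀ : 0 ≤ v) (hv₁ : v ≤ 1) :
    1 - exp (-v) ≤ v * (1 - v / 2 + v ^ 2 / 6) := by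
  have habs : |(-v)| = v := by rw [abs_neg, abs_of_nonneg hv₀]
  have h := (abs_le.1 (exp_bound (n := 5) (habs.trans_le hv₁) (by norm_num))).1
  norm_num [sum_range_succ, Nat.factorial, habs] at h
  nlinarith [pow_nonneg hv₀ 4]

lemma sq_mul_three_add_four_mul_sq_le {v : ℝ} (hv : 1 / 2 ≤ v) (hv' : v ≤ 3 / 4) :
    (1 - v / 2 + v ^ 2 / 6) ^ 2 * (3 + 4 * v ^ 2) ≤ 14 / 5 := by
  have hmul : 0 ≤ (v - 1 / 2) * (3 / 4 - v) := mul_nonneg (by linarith) (by linarith)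
  have hchord : 1 - v / 2 + v ^ 2 / 6 ≤ 15 / 16 - 7 / 24 * v := by linarith
  have hpos : 0 ≤ 1 - v / 2 + v ^ 2 / 6 := by linarith [sq_nonneg v]
  calc (1 - v / 2 + v ^ 2 / 6) ^ 2 * (3 + 4 * v ^ 2)
      ≤ (15 / 16 - 7 / 24 * v) ^ 2 * (3 + 4 * v ^ 2) := by gcongr
    _ ≤ 14 / 5 := by nlinarith

lemma one_sub_exp_neg_mul_sqrt_le {γ s : ℝ} (hγ : 0 < γ) (hs : γ ≤ s) (hs' : s ≤ 3 / 2 * γ) :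
    (1 - exp (-(s / (2 * γ)))) * √(2 * π * exp 1 * (γ ^ 2 + s ^ 2 / 3)) ≤ 2 * s := by
  set v := s / (2 * γ) with hv_def
  have hs_eq : s = 2 * γ * v := by
    rw [hv_def]
    field_simp
  have hv : 1 / 2 ≤ v := by
    rw [le_div_iff₀ (by positivity)]
    linarith
  have hv' : v ≤ 3 / 4 := by
    rw [div_le_iff₀ (by positivity)]
    linarith
  have hp : 0 < 1 - v / 2 + v ^ 2 / 6 := by linarith [sq_nonneg v]
  set p := 1 - v / 2 + v ^ 2 / 6
  have hπe : π * exp 1 ≤ 427 / 50 := by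
    calc π * exp 1 ≤ 3.1416 * 2.7182818286 := by
          gcongr
          exacts [pi_lt_d4.le, exp_one_lt_d9.le]
      _ ≤ 427 / 50 := by norm_num
  have hsqrt : √(2 * π * exp 1 * (γ ^ 2 + s ^ 2 / 3)) ≤ 4 * γ / p := by
    rw [sqrt_le_left (by positivity), div_pow, le_div_iff₀ (by positivity)]
    calc 2 * π * exp 1 * (γ ^ 2 + s ^ 2 / 3) * p ^ 2
        = 2 / 3 * γ ^ 2 * (π * exp 1) * (p ^ 2 * (3 + 4 * v ^ 2)) := by
          rw [hs_eq]
          ring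
      _ ≤ 2 / 3 * γ ^ 2 * (427 / 50) * (14 / 5) := by
          gcongr
          exact sq_mul_three_add_four_mul_sq_le hv hv'
      _ ≤ (4 * γ) ^ 2 := by linarith [sq_nonneg γ]
  calc (1 - exp (-v)) * √(2 * π * exp 1 * (γ ^ 2 + s ^ 2 / 3)) ≤ v * p * (4 * γ / p) :=
        mul_le_mul (one_sub_exp_neg_le (by linarith) (by linarith)) hsqrt (sqrt_nonneg _)
          (by positivity)
    _ = 2 * s := by
        rw [hs_eq]
        field_simp
        ring

lemma exp_div_four_le {u : ℝ} (hu : 3 / 2 ≤ u) (hu' : u ≤ 6) : exp (u / 4) ≤ u := by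
  have hexp_three : exp 3 < 81 / 4 := by
    calc exp 3 = exp 1 ^ 3 := by rw [← exp_nat_mul]; norm_num
      _ < 2.7182818286 ^ 3 := by gcongr; exact exp_one_lt_d9
      _ < 81 / 4 := by norm_num
  have hleft : exp (3 / 8) ≤ 3 / 2 := by
    refine le_of_pow_le_pow_left₀ (n := 8) (by norm_num) (by norm_num) ?_
    rw [← exp_nat_mul]
    norm_num
    linarith
  have hright : exp (3 / 2) ≤ 6 := by
    refine le_of_pow_le_pow_left₀ (n := 2) (by norm_num) (by norm_num) ?_
    rw [← exp_nat_mul]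
    norm_num
    linarith
  have hchord := convexOn_exp.2 (Set.mem_univ (3 / 8)) (Set.mem_univ (3 / 2))
    (by linarith : 0 ≤ (6 - u) / (9 / 2)) (by linarith : 0 ≤ (u - 3 / 2) / (9 / 2)) (by ring)
  simp only [smul_eq_mul] at hchord
  calc exp (u / 4) = exp ((6 - u) / (9 / 2) * (3 / 8) + (u - 3 / 2) / (9 / 2) * (3 / 2)) := by
        ring_nf
    _ ≤ (6 - u) / (9 / 2) * exp (3 / 8) + (u - 3 / 2) / (9 / 2) * exp (3 / 2) := hchord
    _ ≤ (6 - u) / (9 / 2) * (3 / 2) + (u - 3 / 2) / (9 / 2) * 6 := by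
        gcongr
    _ = u := by ring

lemma one_third_lt_exp_neg_sum : 1 / 3 < exp (-2) + 3 * exp (-3) + 5 * exp (-4) := by
  have hexp_neg (n : ℕ) : 2.7182818286⁻¹ ^ n ≤ exp (-n) := by
    rw [exp_neg, ← exp_one_pow, inv_pow]
    gcongr
    exact exp_one_lt_d9.le
  have h₂ := hexp_neg 2
  have h₃ := hexp_neg 3
  have h₄ := hexp_neg 4
  norm_num at h₂ h₃ h₄
  linarith

end TailNumerics

section Tail

open Set Metric

lemma sum_ite_mul_sq_le_sq {a c : ℝ} (hc : 0 ≤ c) (n : ℕ) :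
    (∑ k ∈ Finset.range n, if (k + 1) * c ≤ |a| then (2 * k + 1 : ℝ) else 0) * c ^ 2 ≤ a ^ 2 := by
  set S : ℕ → ℝ := fun n =>
    ∑ k ∈ Finset.range n, if (k + 1) * c ≤ |a| then (2 * k + 1 : ℝ) else 0
  suffices S n ≤ n ^ 2 ∧ S n * c ^ 2 ≤ a ^ 2 from this.2
  induction n with
  | zero => simp [S, sq_nonneg]
  | succ n ih =>
    have hsucc : S (n + 1) = S n + if (n + 1) * c ≤ |a| then (2 * n + 1 : ℝ) else 0 :=
      Finset.sum_range_succ ..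
    split_ifs at hsucc with hn
    · have hle : S (n + 1) ≤ (n + 1) ^ 2 := by linarith [ih.1]
      refine ⟨mod_cast hle, ?_⟩
      calc S (n + 1) * c ^ 2 ≤ (n + 1) ^ 2 * c ^ 2 := by gcongr
        _ = ((n + 1) * c) ^ 2 := by ring
        _ ≤ |a| ^ 2 := by gcongr
        _ = a ^ 2 := sq_abs a
    · rw [hsucc, add_zero]
      exact ⟨ih.1.trans (by gcongr; simp), ih.2⟩

lemma sum_mul_measureReal_mul_sq_le {α : Type*} [MeasurableSpace α] {μ : Measure α}
    [IsFiniteMeasure μ] {X : α → ℝ} (hX : Measurable X) (hL2 : MemLp X 2 μ) {c : ℝ} (hc : 0 ≤ c)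
    (n : ℕ) :
    (∑ k ∈ Finset.range n, (2 * k + 1) * μ.real {ω | (k + 1) * c ≤ |X ω|}) * c ^ 2 ≤
      ∫ ω, X ω ^ 2 ∂μ := by
  have hmeas (k : ℕ) : MeasurableSet {ω | (k + 1) * c ≤ |X ω|} :=
    measurableSet_le measurable_const hX.abs
  set g : ℕ → α → ℝ := fun k => {ω | (k + 1) * c ≤ |X ω|}.indicator fun _ => 2 * k + 1
  have hg_int (k : ℕ) : Integrable (g k) μ := (integrable_const _).indicator (hmeas k)
  have hg (k : ℕ) : ∫ ω, g k ω ∂μ = (2 * k + 1) * μ.real {ω | (k + 1) * c ≤ |X ω|} := by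
    rw [integral_indicator_const _ (hmeas k), smul_eq_mul, mul_comm]
  calc _ = ∫ ω, (∑ k ∈ Finset.range n, g k ω) * c ^ 2 ∂μ := by
        simp only [integral_mul_const, integral_finsetSum _ fun k _ => hg_int k, hg]
    _ ≤ ∫ ω, X ω ^ 2 ∂μ :=
        integral_mono ((integrable_finsetSum _ fun k _ => hg_int k).mul_const _) hL2.integrable_sq
          fun ω => by simpa [g, indicator] using sum_ite_mul_sq_le_sq hc n

variable {μ : Measure ℝ}

lemma measureReal_le_abs_eq_one_sub [IsProbabilityMeasure μ] (s : ℝ) :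
    μ.real {x | s ≤ |x|} = 1 - μ.real (ball 0 s) := by
  rw [← probReal_compl_eq_one_sub measurableSet_ball]
  congr with x
  simp

lemma IsLogConcaveLaw.measureReal_le_abs_rpow_mul_ball_rpow_le [IsFiniteMeasure μ]
    (hμ : IsLogConcaveLaw μ) {l u w : ℝ} (hl₀ : 0 < l) (hl₁ : l < 1)
    (hpos : 0 < l * u - (1 - l) * w) :
    μ.real {x | u ≤ |x|} ^ l * μ.real (ball 0 w) ^ (1 - l) ≤
      μ.real {x | l * u - (1 - l) * w ≤ |x|} := by
  have htail (t : ℝ) : {x : ℝ | t ≤ |x|} = Ici t ∪ Iic (-t) := by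
    ext x
    simp [le_abs, le_neg]
  set t := l * u - (1 - l) * w
  have hball {y : ℝ} (hy : y ∈ ball 0 w) : (1 - l) * |y| ≤ (1 - l) * w := by
    have := sub_pos.2 hl₁
    gcongr
    exact (mem_ball_zero_iff.1 hy).le
  have hright : μ.real (Ici u) ^ l * μ.real (ball 0 w) ^ (1 - l) ≤ μ.real (Ici t) :=
    hμ.measureReal_rpow_mul_rpow_le measurableSet_Ici measurableSet_ball measurableSet_Ici hl₀ hl₁
      fun x hx y hy => by
        rw [mem_Ici] at hx ⊢
        nlinarith [hball hy, neg_abs_le y]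
  have hleft : μ.real (Iic (-u)) ^ l * μ.real (ball 0 w) ^ (1 - l) ≤ μ.real (Iic (-t)) :=
    hμ.measureReal_rpow_mul_rpow_le measurableSet_Iic measurableSet_ball measurableSet_Iic hl₀ hl₁
      fun x hx y hy => by
        rw [mem_Iic] at hx ⊢
        nlinarith [hball hy, le_abs_self y]
  have hdisj : Disjoint (Ici t) (Iic (-t)) := (Iic_disjoint_Ici.2 (by linarith)).symm
  rw [htail, htail, measureReal_union hdisj measurableSet_Iic]
  calc μ.real (Ici u ∪ Iic (-u)) ^ l * μ.real (ball 0 w) ^ (1 - l)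
      ≤ (μ.real (Ici u) + μ.real (Iic (-u))) ^ l * μ.real (ball 0 w) ^ (1 - l) := by
        gcongr
        exact measureReal_union_le _ _
    _ ≤ (μ.real (Ici u) ^ l + μ.real (Iic (-u)) ^ l) * μ.real (ball 0 w) ^ (1 - l) := by
        gcongr
        exact rpow_add_le_add_rpow measureReal_nonneg measureReal_nonneg hl₀.le hl₁.le
    _ ≤ μ.real (Ici t) + μ.real (Iic (-t)) := by
        rw [add_mul]
        exact add_le_add hright hleft

lemma IsLogConcaveLaw.measureReal_ball_mul_exp_le_measureReal_le_abs [IsProbabilityMeasure μ]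
    (hμ : IsLogConcaveLaw μ) {r s t w : ℝ} (hr : 0 ≤ r) (hw : 0 ≤ w) (ht : 0 < t) (hts : t < s)
    (hs : exp (-(r * s)) ≤ μ.real {x | s ≤ |x|}) :
    μ.real (ball 0 w) * exp (-(r * (t + w))) ≤ μ.real {x | t ≤ |x|} := by
  set l := (t + w) / (s + w)
  have hls : l * (s + w) = t + w := div_mul_cancel₀ _ (by linarith)
  have hl₀ : 0 < l := div_pos (by linarith) (by linarith)
  have hl₁ : l < 1 := (div_lt_one (by linarith)).2 (by linarith)
  have ht_eq : t = l * s - (1 - l) * w := by linarith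
  calc μ.real (ball 0 w) * exp (-(r * (t + w)))
      ≤ μ.real (ball 0 w) ^ (1 - l) * exp (-(r * s)) ^ l := by
        rw [← exp_mul]
        gcongr
        · exact self_le_rpow_of_le_one measureReal_nonneg measureReal_le_one (by linarith)
        · nlinarith [mul_nonneg hr (mul_nonneg hl₀.le hw)]
    _ ≤ μ.real (ball 0 w) ^ (1 - l) * μ.real {x | s ≤ |x|} ^ l := by gcongr
    _ ≤ μ.real {x | t ≤ |x|} := by
        rw [mul_comm, ht_eq]
        exact hμ.measureReal_le_abs_rpow_mul_ball_rpow_le hl₀ hl₁ (ht_eq ▸ ht)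

variable {γ s : ℝ}

lemma measureReal_le_abs_mul_sq_le [IsFiniteMeasure μ] (hL2 : MemLp id 2 μ) (hs : 0 ≤ s) :
    μ.real {x | s ≤ |x|} * s ^ 2 ≤ ∫ x, x ^ 2 ∂μ := by
  simpa using sum_mul_measureReal_mul_sq_le measurable_id hL2 hs 1

lemma IsLogConcaveLaw.measureReal_le_abs_le_exp_of_le_three_halves [IsProbabilityMeasure μ]
    (hμ : IsLogConcaveLaw μ) (hL2 : MemLp id 2 μ)
    (hmean : ∫ x, x ∂μ = 0) (hvar : ∫ x, x ^ 2 ∂μ = γ ^ 2) (hγ : 0 < γ) (hs : γ ≤ s)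
    (hs' : s ≤ 3 / 2 * γ) : μ.real {x | s ≤ |x|} ≤ exp (-(s / (2 * γ))) := by
  have hball := hμ.two_mul_le_measureReal_ball_mul_sqrt hL2 hmean (hγ.trans_le hs)
  rw [hvar] at hball
  have := le_of_mul_le_mul_right ((one_sub_exp_neg_mul_sqrt_le hγ hs hs').trans hball)
    (by positivity)
  rw [measureReal_le_abs_eq_one_sub]
  linarith

lemma measureReal_le_abs_le_exp_of_le_six [IsFiniteMeasure μ] (hL2 : MemLp id 2 μ)
    (hvar : ∫ x, x ^ 2 ∂μ = γ ^ 2) (hγ : 0 < γ) (hs : 3 / 2 * γ ≤ s) (hs' : s ≤ 6 * γ) :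
    μ.real {x | s ≤ |x|} ≤ exp (-(s / (2 * γ))) := by
  have hs₀ : 0 < s := by linarith
  have hexp := exp_div_four_le ((le_div_iff₀ hγ).2 hs) ((div_le_iff₀ hγ).2 hs')
  calc μ.real {x | s ≤ |x|} ≤ γ ^ 2 / s ^ 2 :=
        (le_div_iff₀ (by positivity)).2 (hvar ▸ measureReal_le_abs_mul_sq_le hL2 hs₀.le)
    _ = ((s / γ) ^ 2)⁻¹ := by rw [div_pow, inv_div]
    _ ≤ (exp (s / γ / 4) ^ 2)⁻¹ := by gcongr
    _ = exp (-(s / (2 * γ))) := by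
        rw [← exp_nat_mul, ← exp_neg]
        congr 1
        field_simp
        norm_num

lemma IsLogConcaveLaw.measureReal_le_abs_le_exp_of_six_lt [IsProbabilityMeasure μ]
    (hμ : IsLogConcaveLaw μ) (hL2 : MemLp id 2 μ)
    (hvar : ∫ x, x ^ 2 ∂μ = γ ^ 2) (hγ : 0 < γ) (hs : 6 * γ < s) :
    μ.real {x | s ≤ |x|} ≤ exp (-(s / (2 * γ))) := by
  by_contra! hlt
  have hball : 3 / 4 ≤ μ.real (ball 0 (2 * γ)) := by
    have := measureReal_le_abs_mul_sq_le hL2 (by linarith : 0 ≤ 2 * γ)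
    rw [measureReal_le_abs_eq_one_sub, hvar] at this
    nlinarith [pow_pos hγ 2]
  have hBorell (k : ℕ) (hk : k ≤ 2) :
      3 / 4 * exp (-(k + 2)) ≤ μ.real {x | (k + 1) * (2 * γ) ≤ |x|} := by
    have hk : (k : ℝ) ≤ 2 := mod_cast hk
    have hts : (k + 1) * (2 * γ) < s := by nlinarith
    have hexponent : (2 * γ)⁻¹ * ((k + 1) * (2 * γ) + 2 * γ) = k + 2 := by
      field_simp
      ring
    calc 3 / 4 * exp (-(k + 2)) ≤ μ.real (ball 0 (2 * γ)) * exp (-(k + 2)) := by gcongr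
      _ ≤ μ.real {x | (k + 1) * (2 * γ) ≤ |x|} := by
        rw [← hexponent]
        refine hμ.measureReal_ball_mul_exp_le_measureReal_le_abs (by positivity) (by positivity)
          (by positivity) hts ?_
        rw [inv_mul_eq_div]
        exact hlt.le
  have hmoment := sum_mul_measureReal_mul_sq_le measurable_id hL2 (by linarith : 0 ≤ 2 * γ) 3
  have h₀ := hBorell 0 (by norm_num)
  have h₁ := hBorell 1 (by norm_num)
  have h₂ := hBorell 2 (by norm_num)
  simp only [id_eq, hvar, Finset.sum_range_succ, Finset.sum_range_zero] at hmoment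
  norm_num at hmoment h₀ h₁ h₂
  nlinarith [one_third_lt_exp_neg_sum, pow_pos hγ 2]

theorem IsLogConcaveLaw.measureReal_le_abs_le_exp [IsProbabilityMeasure μ]
    (hμ : IsLogConcaveLaw μ) (hL2 : MemLp id 2 μ)
    (hmean : ∫ x, x ∂μ = 0) (hvar : ∫ x, x ^ 2 ∂μ = γ ^ 2) (hγ : 0 < γ) (hs : γ ≤ s) :
    μ.real {x | s ≤ |x|} ≤ exp (-(s / (2 * γ))) := by
  rcases le_total s (3 / 2 * γ) with hs₁ | hs₁
  · exact hμ.measureReal_le_abs_le_exp_of_le_three_halves hL2 hmean hvar hγ hs hs₁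
  rcases le_or_gt s (6 * γ) with hs₂ | hs₂
  · exact measureReal_le_abs_le_exp_of_le_six hL2 hvar hγ hs₁ hs₂
  · exact hμ.measureReal_le_abs_le_exp_of_six_lt hL2 hvar hγ hs₂

end Tail

/-- If `X` is log-concave with mean `0` and variance `γ²`,
then `P(|X| ≥ s) ≤ e^{-s/(2γ)}` for every `s ≥ γ`. -/
theorem logconcave_tail_bound
    {Ω : Type*} [MeasureSpace Ω] [IsProbabilityMeasure (ℙ : Measure Ω)]
    (X : Ω → ℝ) (hX : Measurable X)
    (hlc : IsLogConcaveLaw ((ℙ : Measure Ω).map X))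
    (hint : Integrable X ℙ) (hmean : ∫ ω, X ω ∂ℙ = 0)
    (γ : ℝ) (hγ : 0 ≤ γ) (hvar : ProbabilityTheory.variance X ℙ = γ ^ 2) :
    ∀ s : ℝ, γ ≤ s →
      (ℙ {ω | s ≤ |X ω|}).toReal ≤ Real.exp (-(s / (2 * γ))) := by
  intro s hs
  rcases hγ.eq_or_lt with rfl | hγ
  · rw [mul_zero, div_zero, neg_zero, exp_zero]
    exact measureReal_le_one
  have hX' : AEMeasurable X ℙ := hX.aemeasurable
  have hL2 : MemLp X 2 ℙ := memLp_two_of_variance_ne_zero hX.aestronglyMeasurable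
    (hvar.trans_ne (pow_pos hγ 2).ne')
  have hmap_prob : IsProbabilityMeasure (Measure.map X ℙ) := Measure.isProbabilityMeasure_map hX'
  have hmap_L2 : MemLp id 2 (Measure.map X ℙ) :=
    (memLp_map_measure_iff aestronglyMeasurable_id hX').2 hL2
  have hmap_mean : ∫ x, x ∂(Measure.map X ℙ) = 0 := by
    rw [integral_map hX' (by fun_prop), hmean]
  have hmap_var : ∫ x, x ^ 2 ∂(Measure.map X ℙ) = γ ^ 2 := by
    rw [integral_map hX' (by fun_prop), ← variance_of_integral_eq_zero hX' hmean, hvar]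
  calc (ℙ {ω | s ≤ |X ω|}).toReal = (Measure.map X ℙ).real {x | s ≤ |x|} :=
        (map_measureReal_apply hX (measurableSet_le measurable_const measurable_norm)).symm
    _ ≤ exp (-(s / (2 * γ))) := hlc.measureReal_le_abs_le_exp hmap_L2 hmap_mean hmap_var hγ hs
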